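/- Let R be a commutative ring, A = R[X_1,…,X_n], and 𝔪 = (X_1,…,X_n) ⊆ A. Let d ≥ 0. Suppose H = (H_1,…,H_n) is an n-tuple of polynomials each lying in 𝔪², and G = (G_1,…,G_n), G̃ = (G̃_1,…,G̃_n) are n-tuples of polynomials all of whose components lie in 𝔪, such that G_i ≡ G̃_i mod 𝔪^{d+1} for every i. Then for every j, substituting G into H_j and substituting G̃ into H_j give polynomials that are congruent modulo 𝔪^{d+2}: H_j(G_1,…,G_n) ≡ H_j(G̃_1,…,G̃_n) mod 𝔪^{d+2}. (This says that the chain of ideals A_i := 𝔪^{i+1} is a composition-filtration.) -/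

import Mathlib

/-- The chain of ideals `A_i := 𝔪^{i+1}`, where `𝔪 = (X_1,…,X_n)`, is a
composition-filtration: if all components of `H` lie in `𝔪²`, all components of `G`, `G̃`
lie in `𝔪`, and `G_i ≡ G̃_i mod 𝔪^{d+1}` for all `i`, then
`H_j(G) ≡ H_j(G̃) mod 𝔪^{d+2}` for all `j`. -/
theorem varIdealPowers_compositionFiltration
    (R : Type*) [CommRing R] (n : ℕ) (d : ℕ)
    (𝔪 : Ideal (MvPolynomial (Fin n) R))
    (h𝔪 : 𝔪 = Ideal.span (Set.range (MvPolynomial.X : Fin n → MvPolynomial (Fin n) R)))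
    (H G G' : Fin n → MvPolynomial (Fin n) R)
    (hH : ∀ j, H j ∈ 𝔪 ^ 2)
    (hG : ∀ i, G i ∈ 𝔪) (hG' : ∀ i, G' i ∈ 𝔪)
    (hcong : ∀ i, G i - G' i ∈ 𝔪 ^ (d + 1)) :
    ∀ j, MvPolynomial.bind₁ G (H j) - MvPolynomial.bind₁ G' (H j) ∈ 𝔪 ^ (d + 2) := by
  have h1 : ∀ p, MvPolynomial.bind₁ G p - MvPolynomial.bind₁ G' p ∈ 𝔪 ^ (d + 1) := by
    intro p
    induction p using MvPolynomial.induction_on with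
    | C a => simp
    | add p q hp hq =>
      have h := Ideal.add_mem _ hp hq
      rw [map_add, map_add]
      convert h using 1
      ring
    | mul_X p i hp =>
      have h := Ideal.add_mem _ (Ideal.mul_mem_right (G i) _ hp)
        (Ideal.mul_mem_left _ (MvPolynomial.bind₁ G' p) (hcong i))
      rw [map_mul, map_mul, MvPolynomial.bind₁_X_right, MvPolynomial.bind₁_X_right]
      convert h using 1
      ring
  have h2 : ∀ F : Fin n → MvPolynomial (Fin n) R, (∀ i, F i ∈ 𝔪) →
      ∀ p ∈ 𝔪, MvPolynomial.bind₁ F p ∈ 𝔪 := by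
    intro F hF p hp
    have hle : 𝔪 ≤ Ideal.comap (MvPolynomial.bind₁ F) 𝔪 := by
      conv_lhs => rw [h𝔪]
      rw [Ideal.span_le]
      rintro _ ⟨i, rfl⟩
      simpa using hF i
    exact hle hp
  intro j
  have hj := hH j
  rw [pow_two] at hj
  refine Submodule.mul_induction_on hj ?_ ?_
  · intro p hp q hq
    have e1 := Ideal.mul_mem_mul (h1 q) (h2 G hG p hp)
    have e2 := Ideal.mul_mem_mul (h1 p) (h2 G' hG' q hq)
    rw [← pow_succ] at e1 e2
    have h := Ideal.add_mem _ e1 e2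
    rw [map_mul, map_mul]
    convert h using 1
    ring
  · intro p q hp hq
    have h := Ideal.add_mem _ hp hq
    rw [map_add, map_add]
    convert h using 1
    ring
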